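/- arXiv:2309.11453 — 3 statements merged into one kernel-verified Lean document; each statement's English description precedes it below -/
import Mathlib

section
/- (One-step recursive feasibility / shifting lemma.) Suppose the terminal invariance condition holds: for every x ∈ X_term, π_term(x) ∈ U_c and Φ(X_term, π_term(x), W) ⊆ X_term. Let H ≥ 1, let W be nonempty, and let X₀ ⊆ ℝⁿ be a nonempty feasible set with witness inputs u_0, …, u_{H−1} ∈ U_c and tube sets 𝕏_0 = X₀, 𝕏_1, …, 𝕏_H. Then the set 𝕏_1 is itself feasible: the shifted-and-appended input sequence u_1, …, u_{H−1}, π_term(x*) (for any x* ∈ 𝕏_H) together with the tube sets 𝕏_1, …, 𝕏_H, X_term witnesses feasibility of 𝕏_1 for the same horizon H. -/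
/-! All conditions for the shifted tube except those at its last index are the original ones
moved by one. At the last index, `𝕏 H ⊆ Xterm ⊆ Xc` gives the state constraint, and invariance of
the whole set `Xterm` under the single input `piterm xstar` (available since `xstar ∈ Xterm`),
with monotonicity of `Phi` in its set argument, gives the final inclusion. -/

/-- One-step reachable set: Φ(X, u, W) = { f̄(x, u) + w : x ∈ X, w ∈ W }. -/
def Phi {n m : ℕ} (fbar : (Fin n → ℝ) → (Fin m → ℝ) → (Fin n → ℝ))
    (X : Set (Fin n → ℝ)) (u : Fin m → ℝ) (W : Set (Fin n → ℝ)) : Set (Fin n → ℝ) :=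
  {y | ∃ x ∈ X, ∃ w ∈ W, y = fbar x u + w}

/-- Feasibility of an initial set `X₀` for horizon `H`. -/
def Feasible {n m : ℕ} (fbar : (Fin n → ℝ) → (Fin m → ℝ) → (Fin n → ℝ))
    (Xc : Set (Fin n → ℝ)) (Uc : Set (Fin m → ℝ)) (W : Set (Fin n → ℝ))
    (Xterm : Set (Fin n → ℝ)) (H : ℕ) (X₀ : Set (Fin n → ℝ)) : Prop :=
  ∃ (u : ℕ → (Fin m → ℝ)) (𝕏 : ℕ → Set (Fin n → ℝ)),
    𝕏 0 = X₀ ∧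
    (∀ i < H, u i ∈ Uc) ∧
    (∀ i < H, Phi fbar (𝕏 i) (u i) W ⊆ 𝕏 (i + 1)) ∧
    (∀ i < H, 𝕏 i ⊆ Xc) ∧
    𝕏 H ⊆ Xterm

/-- One-step recursive feasibility / shifting lemma: the shifted-and-appended
input sequence together with the shifted tube sets (terminated by `Xterm`)
witnesses feasibility of `𝕏 1` for the same horizon `H`. -/
theorem shifted_sequence_feasible {n m : ℕ}
    (fbar : (Fin n → ℝ) → (Fin m → ℝ) → (Fin n → ℝ))
    (Xc : Set (Fin n → ℝ)) (Uc : Set (Fin m → ℝ)) (W : Set (Fin n → ℝ))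
    (Xterm : Set (Fin n → ℝ)) (hXterm : Xterm ⊆ Xc)
    (piterm : (Fin n → ℝ) → (Fin m → ℝ))
    (hterm : ∀ x ∈ Xterm, piterm x ∈ Uc ∧ Phi fbar Xterm (piterm x) W ⊆ Xterm)
    (H : ℕ) (hH : 1 ≤ H) (hW : W.Nonempty)
    (X₀ : Set (Fin n → ℝ)) (hX₀ : X₀.Nonempty)
    (u : ℕ → (Fin m → ℝ)) (𝕏 : ℕ → Set (Fin n → ℝ))
    (h0 : 𝕏 0 = X₀)
    (hu : ∀ i < H, u i ∈ Uc)
    (htube : ∀ i < H, Phi fbar (𝕏 i) (u i) W ⊆ 𝕏 (i + 1))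
    (hstate : ∀ i < H, 𝕏 i ⊆ Xc)
    (hfinal : 𝕏 H ⊆ Xterm) :
    ∀ xstar ∈ 𝕏 H,
      (fun i => if i < H then 𝕏 (i + 1) else Xterm) 0 = 𝕏 1 ∧
      (∀ i < H, (fun i => if i + 1 < H then u (i + 1) else piterm xstar) i ∈ Uc) ∧
      (∀ i < H,
        Phi fbar ((fun i => if i < H then 𝕏 (i + 1) else Xterm) i)
            ((fun i => if i + 1 < H then u (i + 1) else piterm xstar) i) W ⊆
          (fun i => if i < H then 𝕏 (i + 1) else Xterm) (i + 1)) ∧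
      (∀ i < H, (fun i => if i < H then 𝕏 (i + 1) else Xterm) i ⊆ Xc) ∧
      (fun i => if i < H then 𝕏 (i + 1) else Xterm) H ⊆ Xterm := by
  intro xstar hx
  obtain ⟨hpi, hinv⟩ := hterm xstar (hfinal hx)
  refine ⟨?_, ?_, ?_, ?_, ?_⟩
  · simp [show 0 < H from hH]
  · intro i _
    by_cases h : i + 1 < H
    · simpa [h] using hu (i + 1) h
    · simpa [h] using hpi
  · intro i hi
    by_cases h : i + 1 < H
    · simpa [h, hi] using htube (i + 1) h
    · -- Last step: the tube set is `𝕏 H ⊆ Xterm`, `Phi` is monotone in its set argument,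
      -- and `Xterm` is invariant under the constant input `piterm xstar`.
      obtain rfl : i + 1 = H := by omega
      simp only [hi, lt_irrefl, if_true, if_false]
      rintro y ⟨x, hxm, w, hw, rfl⟩
      exact hinv ⟨x, hfinal hxm, w, hw, rfl⟩
  · intro i hi
    by_cases h : i + 1 < H
    · simpa [hi] using hstate (i + 1) h
    · obtain rfl : i + 1 = H := by omega
      simpa using hfinal.trans hXterm
  · simp
end

section
/- (Recursive feasibility theorem.) Suppose the terminal invariance condition holds: for every x ∈ X_term, π_term(x) ∈ U_c and Φ(X_term, π_term(x), W) ⊆ X_term. Let H ≥ 1, let W be nonempty, and suppose X₀ ⊆ ℝⁿ is nonempty and feasible. Then there exist a sequence of sets Y : ℕ → Set ℝⁿ and a sequence of inputs v : ℕ → ℝᵐ such that Y 0 = X₀, and for every k ∈ ℕ: Y k is nonempty and feasible, v k ∈ U_c, and Φ(Y k, v k, W) ⊆ Y (k+1). Consequently, every closed-loop trajectory x : ℕ → ℝⁿ with x 0 ∈ X₀ and x (k+1) = f̄(x k, v k) + w k for some w k ∈ W satisfies x k ∈ Y k for all k ∈ ℕ. -/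
/-- Recursive feasibility theorem. -/
theorem recursive_feasibility {n m : ℕ}
    (fbar : (Fin n → ℝ) → (Fin m → ℝ) → (Fin n → ℝ))
    (Xc : Set (Fin n → ℝ)) (Uc : Set (Fin m → ℝ)) (W : Set (Fin n → ℝ))
    (Xterm : Set (Fin n → ℝ)) (hXterm : Xterm ⊆ Xc)
    (piterm : (Fin n → ℝ) → (Fin m → ℝ))
    (hterm : ∀ x ∈ Xterm, piterm x ∈ Uc ∧ Phi fbar Xterm (piterm x) W ⊆ Xterm)
    (H : ℕ) (hH : 1 ≤ H) (hW : W.Nonempty)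
    (X₀ : Set (Fin n → ℝ)) (hX₀ : X₀.Nonempty)
    (hfeas : Feasible fbar Xc Uc W Xterm H X₀) :
    ∃ (Y : ℕ → Set (Fin n → ℝ)) (v : ℕ → (Fin m → ℝ)),
      Y 0 = X₀ ∧
      (∀ k, (Y k).Nonempty ∧ Feasible fbar Xc Uc W Xterm H (Y k) ∧
        v k ∈ Uc ∧ Phi fbar (Y k) (v k) W ⊆ Y (k + 1)) ∧
      (∀ x : ℕ → (Fin n → ℝ),
        x 0 ∈ X₀ →
        (∀ k, ∃ w ∈ W, x (k + 1) = fbar (x k) (v k) + w) →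
        ∀ k, x k ∈ Y k) := by
  obtain ⟨u, X, hX0, hu, hstep, hXc, hXH⟩ := hfeas
  obtain ⟨w, hw⟩ := hW
  have hne : ∀ i ≤ H, (X i).Nonempty := by
    intro i
    induction i with
    | zero => intro _; rwa [hX0]
    | succ i ih =>
      intro hi
      obtain ⟨x, hx⟩ := ih (by omega)
      exact ⟨_, hstep i (by omega) ⟨x, hx, w, hw, rfl⟩⟩
  obtain ⟨z, hz⟩ := (hne H le_rfl).mono hXH
  obtain ⟨hzU, hzinv⟩ := hterm z hz
  -- The plan, continued by the terminal set and a terminal input.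
  let Y : ℕ → Set (Fin n → ℝ) := fun k => if k < H then X k else Xterm
  let v : ℕ → (Fin m → ℝ) := fun k => if k < H then u k else piterm z
  have hY0 : Y 0 = X₀ := by simp [Y, show 0 < H from hH, hX0]
  have hYne : ∀ k, (Y k).Nonempty := by
    intro k
    by_cases hk : k < H
    · simpa [Y, hk] using hne k hk.le
    · simpa only [Y, hk, if_false] using Set.nonempty_of_mem hz
  have hYc : ∀ k, Y k ⊆ Xc := by
    intro k
    by_cases hk : k < H
    · simpa [Y, hk] using hXc k hk
    · simpa [Y, hk] using hXterm
  have hv : ∀ k, v k ∈ Uc := by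
    intro k
    by_cases hk : k < H
    · simpa [v, hk] using hu k hk
    · simpa [v, hk] using hzU
  have hYstep : ∀ k, Phi fbar (Y k) (v k) W ⊆ Y (k + 1) := by
    intro k
    rcases lt_trichotomy (k + 1) H with hk | hk | hk
    · simpa [Y, v, hk, show k < H by omega] using hstep k (by omega)
    -- The last planned step lands in `X H`, which `Y` has replaced by the larger `Xterm`.
    · have h := hstep k (by omega)
      rw [hk] at h
      simpa [Y, v, hk, show k < H by omega] using h.trans hXH
    · simpa [Y, v, show ¬ k < H by omega, show ¬ k + 1 < H by omega] using hzinv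
  refine ⟨Y, v, hY0, fun k => ⟨hYne k, ?_, hv k, hYstep k⟩, ?_⟩
  · refine ⟨fun i => v (k + i), fun i => Y (k + i), rfl, fun i _ => hv _, fun i _ => hYstep _,
      fun i _ => hYc _, ?_⟩
    simp [Y]
  · intro x hx0 hx k
    induction k with
    | zero => rwa [hY0]
    | succ k ih =>
      obtain ⟨w', hw', h⟩ := hx k
      exact hYstep k ⟨x k, ih, w', hw', h⟩
end

section
/- (Safety corollary.) Suppose the terminal invariance condition holds: for every x ∈ X_term, π_term(x) ∈ U_c and Φ(X_term, π_term(x), W) ⊆ X_term. Let H ≥ 1, let W be nonempty, and suppose X₀ ⊆ ℝⁿ is nonempty and feasible. Then for the sequences Y : ℕ → Set ℝⁿ and v : ℕ → ℝᵐ produced by recursive feasibility (Y 0 = X₀, each Y k nonempty and feasible, v k ∈ U_c, Φ(Y k, v k, W) ⊆ Y (k+1)), every closed-loop trajectory x : ℕ → ℝⁿ with x 0 ∈ X₀ and x (k+1) = f̄(x k, v k) + w k for some w k ∈ W satisfies the state constraint x k ∈ X_c for all k ∈ ℕ, while all applied inputs satisfy v k ∈ U_c. -/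
theorem Phi_nonempty {n m : ℕ} (fbar : (Fin n → ℝ) → (Fin m → ℝ) → (Fin n → ℝ))
    {X W : Set (Fin n → ℝ)} (hX : X.Nonempty) (hW : W.Nonempty) (u : Fin m → ℝ) :
    (Phi fbar X u W).Nonempty := by
  obtain ⟨x, hx⟩ := hX
  obtain ⟨w, hw⟩ := hW
  exact ⟨_, x, hx, w, hw, rfl⟩

theorem Phi_mono {n m : ℕ} (fbar : (Fin n → ℝ) → (Fin m → ℝ) → (Fin n → ℝ))
    {X X' : Set (Fin n → ℝ)} (h : X ⊆ X') (u : Fin m → ℝ) (W : Set (Fin n → ℝ)) :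
    Phi fbar X u W ⊆ Phi fbar X' u W := by
  rintro y ⟨x, hx, w, hw, rfl⟩
  exact ⟨x, h hx, w, hw, rfl⟩

/-- Recursive feasibility, one step: the first input of a feasible tube leads into a set that is
again nonempty and feasible, by shifting the tube and appending a terminal step. -/
theorem Feasible.exists_next {n m : ℕ}
    {fbar : (Fin n → ℝ) → (Fin m → ℝ) → (Fin n → ℝ)}
    {Xc : Set (Fin n → ℝ)} {Uc : Set (Fin m → ℝ)} {W Xterm : Set (Fin n → ℝ)}
    (hXterm : Xterm ⊆ Xc) {piterm : (Fin n → ℝ) → (Fin m → ℝ)}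
    (hterm : ∀ x ∈ Xterm, piterm x ∈ Uc ∧ Phi fbar Xterm (piterm x) W ⊆ Xterm)
    {H : ℕ} (hH : 1 ≤ H) (hW : W.Nonempty) {S : Set (Fin n → ℝ)} (hS : S.Nonempty)
    (hfeas : Feasible fbar Xc Uc W Xterm H S) :
    ∃ u ∈ Uc, ∃ T : Set (Fin n → ℝ),
      T.Nonempty ∧ Feasible fbar Xc Uc W Xterm H T ∧ Phi fbar S u W ⊆ T := by
  obtain ⟨u, X, rfl, hu, hPhi, hXc, hXH⟩ := hfeas
  have hne : ∀ i ≤ H, (X i).Nonempty := by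
    intro i
    induction i with
    | zero => exact fun _ => hS
    | succ i ih =>
      intro hi
      exact (Phi_nonempty fbar (ih (by omega)) hW (u i)).mono (hPhi i hi)
  obtain ⟨z, hz⟩ := hne H le_rfl
  obtain ⟨hzU, hzT⟩ := hterm z (hXH hz)
  refine ⟨u 0, hu 0 hH, X 1, hne 1 hH, ?_, hPhi 0 hH⟩
  refine ⟨fun i => if i + 1 < H then u (i + 1) else piterm z,
    fun i => if i < H then X (i + 1) else Xterm, if_pos hH, ?_, ?_, ?_, ?_⟩
  · intro i _
    dsimp only
    split_ifs with h
    · exact hu _ h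
    · exact hzU
  · intro i hi
    dsimp only
    rw [if_pos hi]
    split_ifs with h
    · exact hPhi _ h
    · obtain rfl : H = i + 1 := by omega
      exact (Phi_mono fbar hXH _ W).trans hzT
  · intro i hi
    dsimp only
    rw [if_pos hi]
    by_cases h : i + 1 < H
    · exact hXc _ h
    · obtain rfl : H = i + 1 := by omega
      exact hXH.trans hXterm
  · simp

/-- Safety corollary: the closed loop satisfies the state constraints for all
time and all applied inputs satisfy the input constraints. -/
theorem safety_corollary {n m : ℕ}
    (fbar : (Fin n → ℝ) → (Fin m → ℝ) → (Fin n → ℝ))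
    (Xc : Set (Fin n → ℝ)) (Uc : Set (Fin m → ℝ)) (W : Set (Fin n → ℝ))
    (Xterm : Set (Fin n → ℝ)) (hXterm : Xterm ⊆ Xc)
    (piterm : (Fin n → ℝ) → (Fin m → ℝ))
    (hterm : ∀ x ∈ Xterm, piterm x ∈ Uc ∧ Phi fbar Xterm (piterm x) W ⊆ Xterm)
    (H : ℕ) (hH : 1 ≤ H) (hW : W.Nonempty)
    (X₀ : Set (Fin n → ℝ)) (hX₀ : X₀.Nonempty)
    (hfeas : Feasible fbar Xc Uc W Xterm H X₀) :
    ∃ (Y : ℕ → Set (Fin n → ℝ)) (v : ℕ → (Fin m → ℝ)),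
      Y 0 = X₀ ∧
      (∀ k, (Y k).Nonempty ∧ Feasible fbar Xc Uc W Xterm H (Y k) ∧
        v k ∈ Uc ∧ Phi fbar (Y k) (v k) W ⊆ Y (k + 1)) ∧
      (∀ x : ℕ → (Fin n → ℝ),
        x 0 ∈ X₀ →
        (∀ k, ∃ w ∈ W, x (k + 1) = fbar (x k) (v k) + w) →
        ∀ k, x k ∈ Xc) := by
  choose! u hu T hT hTf hPhi using
    fun (S : Set (Fin n → ℝ)) (h : S.Nonempty ∧ Feasible fbar Xc Uc W Xterm H S) =>
      Feasible.exists_next hXterm hterm hH hW h.1 h.2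
  have hY : ∀ k, (T^[k] X₀).Nonempty ∧ Feasible fbar Xc Uc W Xterm H (T^[k] X₀) := by
    intro k
    induction k with
    | zero => exact ⟨hX₀, hfeas⟩
    | succ k ih =>
      rw [Function.iterate_succ_apply']
      exact ⟨hT _ ih, hTf _ ih⟩
  have hstep : ∀ k, Phi fbar (T^[k] X₀) (u (T^[k] X₀)) W ⊆ T^[k + 1] X₀ := by
    intro k
    rw [Function.iterate_succ_apply']
    exact hPhi _ (hY k)
  refine ⟨fun k => T^[k] X₀, fun k => u (T^[k] X₀), rfl,
    fun k => ⟨(hY k).1, (hY k).2, hu _ (hY k), hstep k⟩, ?_⟩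
  intro x hx0 hx k
  have hmem : x k ∈ T^[k] X₀ := by
    induction k with
    | zero => exact hx0
    | succ k ih =>
      obtain ⟨w, hw, h⟩ := hx k
      exact hstep k ⟨x k, ih, w, hw, h⟩
  obtain ⟨_, X, hX0, _, _, hXc, _⟩ := (hY k).2
  exact hXc 0 hH (hX0 ▸ hmem)
end
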